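/- arXiv:1604.04719 — 2 statements merged into one kernel-verified Lean document; each statement's English description precedes it below -/
import Mathlib

section
/- Let n > n₁ ≥ 2 and m > m₁ ≥ 2 be integers with F_n - F_{n₁} = T_m - T_{m₁}. Then |α^n·α_T^{-m₁}/(√5·c_α·(α_T^{m-m₁} - 1)) - 1| < 2.22·α^{n₁-n+4}, where α = (1+√5)/2, α_T is the unique real root of x³ - x² - x - 1, and c_α = 1/(-α_T² + 4α_T - 1). -/
/-- The Tribonacci sequence: T 0 = 0, T 1 = T 2 = 1,
    T (k+3) = T (k+2) + T (k+1) + T k. -/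
def trib : ℕ → ℤ
  | 0 => 0
  | 1 => 1
  | 2 => 1
  | n + 3 => trib (n + 2) + trib (n + 1) + trib n

/-! With `φ` and `ψ` the golden ratio and its conjugate, `F n = φ ^ n / √5 - ψ ^ n / √5`, and
likewise `T n = c * a ^ n + e n`, where `a` is the real Tribonacci root and `e` is a combination of
powers of the two complex conjugate roots, whose product is `1 / a`. Both error terms are at most
`2 / 7` in the relevant range, so `F n - F n₁ = T m - T m₁` forces `X = φ ^ n / √5` and
`D = c * (a ^ m - a ^ m₁)` to differ by at most `F n₁ + 6 / 7`, while
`D ≥ 3 / 7 * (F n - F n₁) ≥ 3 / 7 * φ ^ (n - 4)`. The quantity to be estimated is `X / D - 1`. -/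

section SecondOrderRecurrence

variable {R : Type*} [CommRing R] {p q : R} {x : ℕ → R}

theorem quadForm_eq_pow_mul_of_recurrence (hx : ∀ k, x (k + 2) = p * x (k + 1) - q * x k) (k : ℕ) :
    x (k + 1) ^ 2 - p * x (k + 1) * x k + q * x k ^ 2 =
      q ^ k * (x 1 ^ 2 - p * x 1 * x 0 + q * x 0 ^ 2) := by
  induction k with
  | zero => simp
  | succ k ih => rw [hx k]; linear_combination q * ih

theorem mul_sq_le_of_recurrence [LinearOrder R] [IsStrictOrderedRing R]
    (hx : ∀ k, x (k + 2) = p * x (k + 1) - q * x k) (k : ℕ) :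
    (4 * q - p ^ 2) * x k ^ 2 ≤ 4 * (q ^ k * (x 1 ^ 2 - p * x 1 * x 0 + q * x 0 ^ 2)) := by
  rw [← quadForm_eq_pow_mul_of_recurrence hx k]
  linarith [sq_nonneg (2 * x (k + 1) - p * x k)]

end SecondOrderRecurrence

section TribonacciRoot

theorem trib_add_two_add_mul_eq_pow {R : Type*} [CommRing R] {a : R}
    (ha : a ^ 3 - a ^ 2 - a - 1 = 0) (k : ℕ) :
    (trib (k + 2) : R) + (a - 1) * trib (k + 1) + (a ^ 2 - a - 1) * trib k = a ^ (k + 1) := by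
  induction k with
  | zero => simp [trib]
  | succ k ih =>
    have hrec : (trib (k + 3) : R) = trib (k + 2) + trib (k + 1) + trib k := by
      simp only [trib, Int.cast_add]
    linear_combination hrec + a * ih - (trib k : R) * ha

/-- The coefficient `c` of `a ^ k` in the Binet formula for the Tribonacci numbers, where `a` is a
root of `x ^ 3 - x ^ 2 - x - 1`. -/
def tribCoeff {K : Type*} [Field K] (a : K) : K :=
  1 / (-a ^ 2 + 4 * a - 1)

/-- The error committed when the `k`-th Tribonacci number is replaced by the term `c * a ^ k` of its
Binet formula; it is the contribution of the other two roots. -/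
def tribError {K : Type*} [Field K] (a : K) (k : ℕ) : K :=
  trib k - tribCoeff a * a ^ k

section Field

variable {K : Type*} [Field K] {a : K}

theorem tribCoeff_mul_eq_one (hd : -a ^ 2 + 4 * a - 1 ≠ 0) :
    tribCoeff a * (-a ^ 2 + 4 * a - 1) = 1 :=
  one_div_mul_cancel hd

theorem tribError_add_two (ha : a ^ 3 - a ^ 2 - a - 1 = 0) (hd : -a ^ 2 + 4 * a - 1 ≠ 0) (k : ℕ) :
    tribError a (k + 2) = (1 - a) * tribError a (k + 1) - (a ^ 2 - a - 1) * tribError a k := by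
  have hgeom : tribCoeff a * (a ^ (k + 2) + (a - 1) * a ^ (k + 1) + (a ^ 2 - a - 1) * a ^ k) =
      a ^ (k + 1) := by
    linear_combination a ^ (k + 1) * tribCoeff_mul_eq_one hd + tribCoeff a * a ^ k * ha
  simp only [tribError]
  linear_combination trib_add_two_add_mul_eq_pow ha k - hgeom

theorem tribError_quadForm_zero (ha : a ^ 3 - a ^ 2 - a - 1 = 0) (hd : -a ^ 2 + 4 * a - 1 ≠ 0) :
    tribError a 1 ^ 2 - (1 - a) * tribError a 1 * tribError a 0 +
      (a ^ 2 - a - 1) * tribError a 0 ^ 2 = tribCoeff a * (a ^ 2 - a - 1) ^ 2 := by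
  simp only [tribError, trib, Int.cast_zero, Int.cast_one, pow_zero, pow_one]
  linear_combination (tribCoeff a * a - 1) * tribCoeff_mul_eq_one hd +
    (tribCoeff a ^ 2 + tribCoeff a * (1 - a)) * ha

/-- The discriminant `-44` of `x ^ 3 - x ^ 2 - x - 1` is that of its quadratic factor times the
square of the derivative at `a`; that derivative is `a / c`, with `c` the coefficient
`tribCoeff a`. -/
theorem neg_discrim_mul_sq_eq (ha : a ^ 3 - a ^ 2 - a - 1 = 0) (hd : -a ^ 2 + 4 * a - 1 ≠ 0) :
    (4 * (a ^ 2 - a - 1) - (1 - a) ^ 2) * a ^ 2 = 44 * tribCoeff a ^ 2 := by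
  rw [tribCoeff, div_pow, one_pow, mul_one_div, eq_div_iff (pow_ne_zero 2 hd)]
  linear_combination (3 * a ^ 5 - 23 * a ^ 4 + 45 * a ^ 3 + 5 * a ^ 2 - 44 * a + 44) * ha

end Field

section OrderedField

variable {K : Type*} [Field K] [LinearOrder K] [IsStrictOrderedRing K] {a : K}

theorem lt_of_trib_root (ha : a ^ 3 - a ^ 2 - a - 1 = 0) : 1.83 < a := by
  by_contra! hle
  nlinarith [sq_nonneg (a + 0.415)]

theorem tribCoeff_pos (ha : a ^ 3 - a ^ 2 - a - 1 = 0) : 0 < tribCoeff a := by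
  have ha₁ := lt_of_trib_root ha
  have hderiv : a * (-a ^ 2 + 4 * a - 1) = (3 * a + 1) * (a - 1) := by linear_combination -ha
  refine one_div_pos.2 (pos_of_mul_pos_right (a := a) ?_ (by linarith))
  rw [hderiv]
  exact mul_pos (by linarith) (by linarith)

theorem mul_tribError_sq_le_one (ha : a ^ 3 - a ^ 2 - a - 1 = 0) (k : ℕ) :
    11 * tribCoeff a * a ^ k * tribError a k ^ 2 ≤ 1 := by
  have hc := tribCoeff_pos ha
  have ha₀ : 0 < a := by linarith [lt_of_trib_root ha]
  have hd : -a ^ 2 + 4 * a - 1 ≠ 0 := (one_div_pos.1 hc).ne'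
  have hinv : (a ^ 2 - a - 1) * a = 1 := by linear_combination ha
  have hdecay := mul_sq_le_of_recurrence (tribError_add_two ha hd) k
  rw [tribError_quadForm_zero ha hd] at hdecay
  refine le_of_mul_le_mul_left ?_ (by positivity : 0 < 4 * tribCoeff a)
  calc 4 * tribCoeff a * (11 * tribCoeff a * a ^ k * tribError a k ^ 2)
      = (4 * (a ^ 2 - a - 1) - (1 - a) ^ 2) * tribError a k ^ 2 * a ^ (k + 2) := by
        linear_combination -a ^ k * tribError a k ^ 2 * neg_discrim_mul_sq_eq ha hd
    _ ≤ 4 * ((a ^ 2 - a - 1) ^ k * (tribCoeff a * (a ^ 2 - a - 1) ^ 2)) * a ^ (k + 2) := by gcongr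
    _ = 4 * tribCoeff a * ((a ^ 2 - a - 1) * a) ^ (k + 2) := by rw [mul_pow]; ring
    _ = 4 * tribCoeff a * 1 := by rw [hinv, one_pow]

theorem abs_tribError_le (ha : a ^ 3 - a ^ 2 - a - 1 = 0) {k : ℕ} (hk : 2 ≤ k) :
    |tribError a k| ≤ 2 / 7 := by
  have hc := tribCoeff_pos ha
  have ha₁ := lt_of_trib_root ha
  -- `49 / 44` is chosen so that `11 * (49 / 44) = (7 / 2) ^ 2`.
  have hlead : 49 / 44 ≤ tribCoeff a * a ^ k := calc
    49 / 44 = tribCoeff a * (49 / 44 * (-a ^ 2 + 4 * a - 1)) := by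
      linear_combination -49 / 44 * tribCoeff_mul_eq_one (one_div_pos.1 hc).ne'
    _ ≤ tribCoeff a * a ^ 2 := by gcongr; nlinarith
    _ ≤ tribCoeff a * a ^ k := by gcongr; linarith
  refine abs_le_of_sq_le_sq ?_ (by norm_num)
  nlinarith [mul_tribError_sq_le_one ha k,
    mul_le_mul_of_nonneg_right hlead (sq_nonneg (tribError a k))]

theorem abs_trib_sub_trib_sub_le (ha : a ^ 3 - a ^ 2 - a - 1 = 0) {m m₁ : ℕ} (hm : 2 ≤ m)
    (hm₁ : 2 ≤ m₁) :
    |((trib m : K) - trib m₁) - tribCoeff a * (a ^ m - a ^ m₁)| ≤ 4 / 7 := by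
  calc |((trib m : K) - trib m₁) - tribCoeff a * (a ^ m - a ^ m₁)|
      = |tribError a m - tribError a m₁| := by simp only [tribError]; ring_nf
    _ ≤ |tribError a m| + |tribError a m₁| := abs_sub _ _
    _ ≤ 4 / 7 := by linarith [abs_tribError_le ha hm, abs_tribError_le ha hm₁]

end OrderedField

end TribonacciRoot

section Fibonacci

open Real goldenRatio

theorem fib_succ_le_goldenRatio_pow (k : ℕ) : (Nat.fib (k + 1) : ℝ) ≤ φ ^ k := by
  rw [← fib_succ_sub_goldenConj_mul_fib, le_sub_self_iff]
  exact mul_nonpos_of_nonpos_of_nonneg goldenConj_neg.le (Nat.cast_nonneg _)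

theorem goldenRatio_pow_le_mul_fib_succ (k : ℕ) : φ ^ k ≤ φ * Nat.fib (k + 1) := by
  have hmono : (Nat.fib k : ℝ) ≤ Nat.fib (k + 1) := mod_cast Nat.fib_le_fib_succ
  calc φ ^ k = Nat.fib (k + 1) - ψ * Nat.fib k := (fib_succ_sub_goldenConj_mul_fib k).symm
    _ ≤ Nat.fib (k + 1) - ψ * Nat.fib (k + 1) := by nlinarith [goldenConj_neg]
    _ = φ * Nat.fib (k + 1) := by rw [← one_sub_goldenRatio]; ring

theorem abs_goldenRatio_pow_div_sub_fib_le {n : ℕ} (hn : n ≠ 0) :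
    |φ ^ n / √5 - Nat.fib n| ≤ 2 / 7 := by
  have hψ : |ψ| = (√5 - 1) / 2 := by rw [abs_of_neg goldenConj_neg, goldenConj]; ring
  have h5 : √5 ≤ 7 / 3 := Real.sqrt_le_iff.2 (by norm_num)
  calc |φ ^ n / √5 - Nat.fib n| = |ψ| ^ n / √5 := by
        rw [coe_fib_eq, sub_div, sub_sub_cancel, abs_div, abs_pow, abs_of_nonneg (sqrt_nonneg 5)]
    _ ≤ |ψ| / √5 := by
        gcongr
        exact pow_le_of_le_one (abs_nonneg ψ) (by linarith) hn
    _ ≤ 2 / 7 := by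
        rw [hψ, div_le_iff₀ (by positivity)]
        linarith

theorem goldenRatio_zpow_sub_four_le_fib_sub_fib {n n₁ : ℕ} (hn : 3 ≤ n) (hn₁ : n₁ < n) :
    φ ^ ((n : ℤ) - 4) ≤ (Nat.fib n : ℝ) - Nat.fib n₁ := by
  obtain ⟨k, rfl⟩ := Nat.exists_eq_add_of_le' hn
  have hmono : (Nat.fib n₁ : ℝ) ≤ Nat.fib (k + 2) := mod_cast Nat.fib_mono (by lia)
  have hrec : (Nat.fib (k + 3) : ℝ) = Nat.fib (k + 1) + Nat.fib (k + 2) := mod_cast Nat.fib_add_two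
  calc φ ^ (((k + 3 : ℕ) : ℤ) - 4) = φ ^ k / φ := by
        rw [← zpow_natCast, div_eq_mul_inv, ← zpow_sub_one₀ goldenRatio_ne_zero]
        congr 1
        lia
    _ ≤ Nat.fib (k + 1) :=
        (div_le_iff₀' goldenRatio_pos).2 (goldenRatio_pow_le_mul_fib_succ k)
    _ ≤ Nat.fib (k + 3) - Nat.fib n₁ := by linarith

theorem fib_add_lt_mul_goldenRatio_pow {k : ℕ} (hk : 2 ≤ k) :
    (Nat.fib k : ℝ) + 6 / 7 < 2.22 * (3 / 7) * φ ^ k := by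
  obtain ⟨j, rfl⟩ := Nat.exists_eq_add_of_le' hk
  have hφ : 1.618 < φ := by
    have h5 : 2.236 < √5 := Real.lt_sqrt_of_sq_lt (by norm_num)
    rw [goldenRatio]; linarith
  have hpow : φ ≤ φ ^ (j + 1) := le_self_pow₀ one_lt_goldenRatio.le (by lia)
  calc (Nat.fib (j + 2) : ℝ) + 6 / 7 ≤ φ ^ (j + 1) + 6 / 7 := by
        gcongr; exact fib_succ_le_goldenRatio_pow (j + 1)
    _ < 2.22 * (3 / 7) * (φ ^ (j + 1) * 1.618) := by linarith
    _ ≤ 2.22 * (3 / 7) * φ ^ (j + 2) := by rw [pow_succ φ (j + 1)]; gcongr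

end Fibonacci

theorem mul_zpow_neg_div_eq {K : Type*} [Field K] (a x s c : K) {m m₁ : ℕ} (hm : m₁ ≤ m) :
    x * a ^ (-(m₁ : ℤ)) / (s * c * (a ^ (m - m₁) - 1)) = x / s / (c * (a ^ m - a ^ m₁)) := by
  have hsplit : a ^ m - a ^ m₁ = a ^ m₁ * (a ^ (m - m₁) - 1) := by
    rw [mul_sub, ← pow_add, Nat.add_sub_cancel' hm, mul_one]
  rw [hsplit, zpow_neg, zpow_natCast]
  simp only [div_eq_mul_inv, mul_inv]
  ring

/-- If `n > n₁ ≥ 2`, `m > m₁ ≥ 2` and `F n - F n₁ = T m - T m₁`, then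
`|α^n·α_T^(-m₁)/(√5·c_α·(α_T^(m-m₁)-1)) - 1| < 2.22·α^(n₁-n+4)`. -/
theorem fib_trib_linear_form_two (α αT cα : ℝ)
    (hα : α = (1 + Real.sqrt 5) / 2)
    (hroot : αT ^ 3 - αT ^ 2 - αT - 1 = 0)
    (huniq : ∀ x : ℝ, x ^ 3 - x ^ 2 - x - 1 = 0 → x = αT)
    (hcα : cα = 1 / (-αT ^ 2 + 4 * αT - 1))
    (n m n₁ m₁ : ℕ) (hn₁ : 2 ≤ n₁) (hn : n₁ < n) (hm₁ : 2 ≤ m₁) (hm : m₁ < m)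
    (h : (Nat.fib n : ℤ) - Nat.fib n₁ = trib m - trib m₁) :
    |α ^ n * αT ^ (-(m₁ : ℤ)) / (Real.sqrt 5 * cα * (αT ^ (m - m₁) - 1)) - 1| <
      2.22 * α ^ ((n₁ : ℤ) - n + 4) := by
  obtain rfl : α = Real.goldenRatio := hα
  obtain rfl : cα = tribCoeff αT := hcα
  rw [mul_zpow_neg_div_eq _ _ _ _ hm.le]
  set X := Real.goldenRatio ^ n / √5
  set D := tribCoeff αT * (αT ^ m - αT ^ m₁)
  have hX := abs_le.1 (abs_goldenRatio_pow_div_sub_fib_le (n := n) (by lia))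
  have hT := abs_le.1 (abs_trib_sub_trib_sub_le hroot (hm₁.trans hm.le) hm₁)
  have hFT : (Nat.fib n : ℝ) - Nat.fib n₁ = trib m - trib m₁ := mod_cast h
  have hF_one : (1 : ℝ) ≤ Nat.fib n - Nat.fib n₁ :=
    le_sub_iff_add_le'.2 (mod_cast (Nat.fib_lt_fib hn₁).2 hn)
  have hD : 3 / 7 * Real.goldenRatio ^ ((n : ℤ) - 4) ≤ D := by
    linarith [goldenRatio_zpow_sub_four_le_fib_sub_fib (by lia) hn]
  have hDpos : 0 < D := by linarith
  rw [div_sub_one hDpos.ne', abs_div, abs_of_pos hDpos, div_lt_iff₀ hDpos]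
  calc |X - D| ≤ Nat.fib n₁ + 6 / 7 := by
        rw [abs_le]; constructor <;> linarith
    _ < 2.22 * (3 / 7) * Real.goldenRatio ^ n₁ := fib_add_lt_mul_goldenRatio_pow hn₁
    _ = 2.22 * Real.goldenRatio ^ ((n₁ : ℤ) - n + 4) *
        (3 / 7 * Real.goldenRatio ^ ((n : ℤ) - 4)) := by
        rw [mul_mul_mul_comm, ← zpow_add₀ Real.goldenRatio_ne_zero, ← zpow_natCast]
        congr 2; ring
    _ ≤ 2.22 * Real.goldenRatio ^ ((n₁ : ℤ) - n + 4) * D := by gcongr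
end

section
/- For all positive integers n and all integers m > m₁ ≥ 1, α^n ≠ √5·c_α·(α_T^{m-m₁} - 1)·α_T^{m₁}, where α = (1+√5)/2, α_T is the unique real root of x³ - x² - x - 1, and c_α = 1/(-α_T² + 4α_T - 1). (Equivalently, α^{2n} ≠ 5·c_α²·α_T^{2m₁}·(α_T^{m-m₁} - 1)².) -/
/-!
The real root `t` of the irreducible cubic `X³ - X² - X - 1` generates an extension of `ℚ` of odd
degree `3`, so `ℚ(t)` cannot contain `√5`. On the other hand `φ ^ n = a + b √5` with `a`, `b`
rational and `a > 0`, so an equality `φ ^ n = √5 r` with `r ∈ ℚ(t)` would express `√5` as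
`a / (r - b) ∈ ℚ(t)`.
-/

open IntermediateField Module Polynomial Real
open scoped goldenRatio

theorem exists_pow_eq_of_prime_not_dvd_finrank {F E : Type*} [Field F] [Field E] [Algebra F E]
    {p : ℕ} (hp : p.Prime) (hdvd : ¬ p ∣ finrank F E) {a : F} {x : E}
    (hx : x ^ p = algebraMap F E a) : ∃ b : F, b ^ p = a := by
  by_contra! hb
  have hirr : Irreducible (X ^ p - C a) := X_pow_sub_C_irreducible_of_prime hp hb
  have hmonic : (X ^ p - C a).Monic := monic_X_pow_sub_C a hp.ne_zero
  have hroot : aeval x (X ^ p - C a) = 0 := by simp [hx]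
  have hdeg : (minpoly F x).natDegree = p := by
    rw [← minpoly.eq_of_irreducible_of_monic hirr hroot hmonic, natDegree_X_pow_sub_C]
  exact hdvd (hdeg ▸ minpoly.degree_dvd ⟨_, hmonic, hroot⟩)

theorem sqrt_notMem_of_odd_finrank {K : IntermediateField ℚ ℝ} (hK : Odd (finrank ℚ K)) {q : ℚ}
    (hq : Irrational √(q : ℝ)) : √(q : ℝ) ∉ K := by
  intro hmem
  obtain ⟨hq_sq, hq_nonneg⟩ := irrational_sqrt_ratCast_iff.1 hq
  have hsq : (⟨√(q : ℝ), hmem⟩ : K) ^ 2 = algebraMap ℚ K q :=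
    Subtype.ext (Real.sq_sqrt (Rat.cast_nonneg.2 hq_nonneg))
  obtain ⟨b, hb⟩ :=
    exists_pow_eq_of_prime_not_dvd_finrank Nat.prime_two hK.not_two_dvd_nat hsq
  exact hq_sq ⟨b, by rw [← hb, sq]⟩

/-- The characteristic polynomial `X³ - X² - X - 1` of the Tribonacci recurrence. It is defined
over every commutative ring so that it can be reduced modulo `3`. -/
noncomputable def tribonacciPoly (R : Type*) [CommRing R] : R[X] :=
  X ^ 3 - X ^ 2 - X - 1

theorem monic_tribonacciPoly (R : Type*) [CommRing R] [Nontrivial R] :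
    (tribonacciPoly R).Monic := by
  unfold tribonacciPoly
  monicity!

theorem natDegree_tribonacciPoly (R : Type*) [CommRing R] [Nontrivial R] :
    (tribonacciPoly R).natDegree = 3 := by
  unfold tribonacciPoly
  compute_degree!

theorem map_tribonacciPoly {R S : Type*} [CommRing R] [CommRing S] (f : R →+* S) :
    (tribonacciPoly R).map f = tribonacciPoly S := by
  simp [tribonacciPoly]

theorem irreducible_tribonacciPoly_zmod_three : Irreducible (tribonacciPoly (ZMod 3)) := by
  have hno_root : ∀ x : ZMod 3, x ^ 3 - x ^ 2 - x - 1 ≠ 0 := by decide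
  have hdeg := natDegree_tribonacciPoly (ZMod 3)
  rw [irreducible_iff_roots_eq_zero_of_degree_le_three (by omega) (by omega)]
  refine Multiset.eq_zero_of_forall_notMem fun x hx ↦ hno_root x ?_
  simpa [tribonacciPoly] using isRoot_of_mem_roots hx

theorem irreducible_tribonacciPoly_rat : Irreducible (tribonacciPoly ℚ) := by
  have hint : Irreducible (tribonacciPoly ℤ) := by
    apply (monic_tribonacciPoly ℤ).irreducible_of_irreducible_map (Int.castRingHom (ZMod 3))
    rw [map_tribonacciPoly]
    exact irreducible_tribonacciPoly_zmod_three
  rw [← map_tribonacciPoly (algebraMap ℤ ℚ)]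
  exact (monic_tribonacciPoly ℤ).irreducible_iff_irreducible_map_fraction_map.1 hint

theorem finrank_adjoin_root_tribonacciPoly {L : Type*} [Field L] [Algebra ℚ L] {t : L}
    (ht : t ^ 3 - t ^ 2 - t - 1 = 0) : finrank ℚ ℚ⟮t⟯ = 3 := by
  have hmonic := monic_tribonacciPoly ℚ
  have hroot : aeval t (tribonacciPoly ℚ) = 0 := by simpa [tribonacciPoly] using ht
  rw [adjoin.finrank ⟨_, hmonic, hroot⟩,
    ← minpoly.eq_of_irreducible_of_monic irreducible_tribonacciPoly_rat hroot hmonic,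
    natDegree_tribonacciPoly]

theorem sqrt_five_notMem_adjoin_root_tribonacciPoly {t : ℝ} (ht : t ^ 3 - t ^ 2 - t - 1 = 0) :
    √5 ∉ ℚ⟮t⟯ := by
  have hodd : Odd (finrank ℚ ℚ⟮t⟯) := by
    rw [finrank_adjoin_root_tribonacciPoly ht]
    decide
  have hirr : Irrational √((5 : ℚ) : ℝ) := by
    exact_mod_cast Nat.prime_five.irrational_sqrt
  exact_mod_cast sqrt_notMem_of_odd_finrank hodd hirr

theorem goldenRatio_pow_eq_add_mul_sqrt_five (n : ℕ) :
    φ ^ n = (Nat.fib (n + 1) - Nat.fib n / 2) + Nat.fib n / 2 * √5 := by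
  rw [← fib_succ_sub_goldenConj_mul_fib, goldenConj]
  ring

theorem fib_succ_sub_half_fib_pos (n : ℕ) : (0 : ℝ) < Nat.fib (n + 1) - Nat.fib n / 2 := by
  have hle : (Nat.fib n : ℝ) ≤ Nat.fib (n + 1) := by exact_mod_cast Nat.fib_le_fib_succ
  have hpos : (0 : ℝ) < Nat.fib (n + 1) := by exact_mod_cast Nat.fib_pos.2 n.succ_pos
  linarith

theorem goldenRatio_pow_ne_sqrt_five_mul {S : Type*} [SetLike S ℝ] [SubfieldClass S ℝ] {K : S}
    (hK : √5 ∉ K) {r : ℝ} (hr : r ∈ K) (n : ℕ) : φ ^ n ≠ √5 * r := by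
  intro heq
  have hprod : √5 * (r - Nat.fib n / 2) = Nat.fib (n + 1) - Nat.fib n / 2 := by
    linear_combination goldenRatio_pow_eq_add_mul_sqrt_five n - heq
  have hfib : (Nat.fib n / 2 : ℝ) ∈ K := div_mem (natCast_mem K _) (ofNat_mem K 2)
  have hne : r - Nat.fib n / 2 ≠ 0 :=
    right_ne_zero_of_mul (hprod ▸ (fib_succ_sub_half_fib_pos n).ne')
  rw [eq_div_of_mul_eq hne hprod] at hK
  exact hK (div_mem (sub_mem (natCast_mem K _) hfib) (sub_mem hr hfib))

/-- For all positive `n` and all `m > m₁ ≥ 1`, we have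
`α^n ≠ √5·c_α·(α_T^(m-m₁) - 1)·α_T^(m₁)`. -/
theorem phi_two_ne_zero (α αT cα : ℝ)
    (hα : α = (1 + Real.sqrt 5) / 2)
    (hroot : αT ^ 3 - αT ^ 2 - αT - 1 = 0)
    (huniq : ∀ x : ℝ, x ^ 3 - x ^ 2 - x - 1 = 0 → x = αT)
    (hcα : cα = 1 / (-αT ^ 2 + 4 * αT - 1))
    (n m m₁ : ℕ) (hn : 1 ≤ n) (hm₁ : 1 ≤ m₁) (hm : m₁ < m) :
    α ^ n ≠ Real.sqrt 5 * cα * (αT ^ (m - m₁) - 1) * αT ^ m₁ := by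
  have hT : αT ∈ ℚ⟮αT⟯ := mem_adjoin_simple_self ℚ αT
  have hc : cα ∈ ℚ⟮αT⟯ := by
    rw [hcα]
    exact div_mem (one_mem _)
      (sub_mem (add_mem (neg_mem (pow_mem hT 2)) (mul_mem (ofNat_mem _ 4) hT)) (one_mem _))
  have hr : cα * (αT ^ (m - m₁) - 1) * αT ^ m₁ ∈ ℚ⟮αT⟯ :=
    mul_mem (mul_mem hc (sub_mem (pow_mem hT _) (one_mem _))) (pow_mem hT _)
  rw [hα, mul_assoc √5, mul_assoc √5]
  exact goldenRatio_pow_ne_sqrt_five_mul (sqrt_five_notMem_adjoin_root_tribonacciPoly hroot) hr n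
end
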